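/- Let α > 2. For every M > 0 and r > 0 there exist constants k = k(α,M,r) > 0 and C(α,M,r) > 0 such that for every (x,t) ∈ Ω_{α,M} with |t| > k one has |Ω_{α,M} ∩ B((x,t),r)| ≤ C(α,M,r) · |t|^{n(2−α)}, where |·| of a set denotes its Lebesgue measure. -/

import Mathlib

/-!
Write `u = N⁴ = |x|⁴ + 16|t|²` and `a = α/4`, so that `w_α = exp (-u^a)`. The chain rule gives
`V_α = ¼|∇_H u^a|² - ½ Δ u^a`, where `Δ = ∑ X_j²`, a combination of powers of `u` with
coefficients `|∇_H u|²` and `Δu` (`VA_eq`). By skew-symmetry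
`|∇_H u|² = 16|x|⁶ + 256|J_t x|²` and `Δu = 8(n+1)|x|² + 8 ∑_k |J_k x|²`
(`sum_kP_sq`, `sum_XD_kP`).

The Métivier condition and compactness give `|J_t x|² ≥ c|t|²|x|²` (`exists_metivier_const`), hence
`|∇_H u|²` is comparable to `|x|² u`, while `Δu ≤ C|x|²`. So
`V_α ≥ |x|² u^(2a-1) (A - B u^(-a))` with `A > 0`, and for large `u` the inequality `V_α ≤ M` forces
`|x|² ≤ C u^(1-2a) ≤ C' |t|^(2-α)` (`exists_sqs_le`, `exists_sqs_le_rpow`).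

A ball of radius `r` about a point of `Ω_{α,M}` with `|t|` large has vertical extent bounded by a
constant `R`, because its centre has bounded `x` (`kBall_vertical`); on it the vertical coordinate
therefore has norm at least `|t|/2`. The intersection thus lies in a box with `2n` half-sides
`ρ ≲ |t|^((2-α)/2)` and `m` half-sides `R`, whose volume is a constant times `|t|^(n(2-α))`.
-/


open MeasureTheory Filter
open scoped BigOperators ENNReal NNReal

noncomputable section

/-- Points of the Métivier group `G = ℝ^{2n} × ℝ^m`. -/
abbrev GrpPt (n m : ℕ) := (Fin (2*n) → ℝ) × (Fin m → ℝ)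

/-- Euclidean norm on `Fin k → ℝ`. -/
def e2norm {k : ℕ} (x : Fin k → ℝ) : ℝ := Real.sqrt (∑ i, (x i)^2)

/-- Kaplan norm `N(x,t) = (|x|^4 + 16|t|^2)^(1/4)`. -/
def kN {n m : ℕ} (p : GrpPt n m) : ℝ := (e2norm p.1 ^ 4 + 16 * e2norm p.2 ^ 2) ^ ((1:ℝ)/4)

/-- Group multiplication of the Métivier group. -/
def gmul {n m : ℕ} (J : Fin m → Matrix (Fin (2*n)) (Fin (2*n)) ℝ) (p q : GrpPt n m) : GrpPt n m :=
  (p.1 + q.1, p.2 + q.2 + fun k => (1/2 : ℝ) * ∑ i, (J k).mulVec p.1 i * q.1 i)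

/-- Horizontal left-invariant vector field `X_j`. -/
def XD {n m : ℕ} (J : Fin m → Matrix (Fin (2*n)) (Fin (2*n)) ℝ)
    {E : Type*} [NormedAddCommGroup E] [NormedSpace ℝ E]
    (j : Fin (2*n)) (f : GrpPt n m → E) (p : GrpPt n m) : E :=
  fderiv ℝ f p (Pi.single j 1, 0)
    + (1/2 : ℝ) • ∑ k, ((J k).mulVec p.1 j) • fderiv ℝ f p (0, Pi.single k 1)

/-- Squared length of the horizontal gradient. -/
def gradSq {n m : ℕ} (J : Fin m → Matrix (Fin (2*n)) (Fin (2*n)) ℝ)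
    (f : GrpPt n m → ℝ) (p : GrpPt n m) : ℝ := ∑ j, (XD J j f p)^2

/-- Sub-Laplacian `L f = -∑ X_j (X_j f)`. -/
def LSub {n m : ℕ} (J : Fin m → Matrix (Fin (2*n)) (Fin (2*n)) ℝ)
    {E : Type*} [NormedAddCommGroup E] [NormedSpace ℝ E]
    (f : GrpPt n m → E) (p : GrpPt n m) : E := - ∑ j, XD J j (XD J j f) p

/-- Weight `w_α = exp (-N^α)`. -/
def wA {n m : ℕ} (α : ℝ) (p : GrpPt n m) : ℝ := Real.exp (-(kN p ^ α))

/-- Potential `V_α = -(1/4) |grad w_α|²/w_α² - (1/2) (L w_α)/w_α`. -/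
def VA {n m : ℕ} (J : Fin m → Matrix (Fin (2*n)) (Fin (2*n)) ℝ) (α : ℝ) (p : GrpPt n m) : ℝ :=
  -(1/4) * gradSq J (wA α) p / (wA α p)^2 - (1/2) * LSub J (wA α) p / wA α p

/-- The sublevel set `Ω_{α,M}` of the potential `V_α`. -/
def OmegaSet {n m : ℕ} (J : Fin m → Matrix (Fin (2*n)) (Fin (2*n)) ℝ) (α M : ℝ) :
    Set (GrpPt n m) := {p | p ≠ 0 ∧ VA J α p ≤ M}

/-- Left-invariant ball of radius `r` centred at `g` for the Kaplan quasi-norm. -/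
def kBall {n m : ℕ} (J : Fin m → Matrix (Fin (2*n)) (Fin (2*n)) ℝ) (g : GrpPt n m) (r : ℝ) :
    Set (GrpPt n m) := {h | kN (gmul J (-g.1, -g.2) h) < r}

/-! ### Horizontal calculus -/

/-- The value at `p` of the left-invariant field `X_j`, as a tangent vector of `ℝ^{2n} × ℝ^m`. -/
def hdir {n m : ℕ} (J : Fin m → Matrix (Fin (2*n)) (Fin (2*n)) ℝ) (j : Fin (2*n))
    (p : GrpPt n m) : GrpPt n m :=
  (Pi.single j 1, fun k => (1/2 : ℝ) * (J k).mulVec p.1 j)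

/-- `|y|²`, the square of `e2norm`, as a polynomial. -/
def sqs {k : ℕ} (y : Fin k → ℝ) : ℝ := ∑ i, (y i)^2

/-- `N⁴ = |x|⁴ + 16|t|²`, as a polynomial. -/
def kU {n m : ℕ} (p : GrpPt n m) : ℝ := (sqs p.1)^2 + 16 * sqs p.2

/-- The polynomial `X_j (N⁴) = 4|x|² x_j + 16 (J_t x)_j`. -/
def kP {n m : ℕ} (J : Fin m → Matrix (Fin (2*n)) (Fin (2*n)) ℝ) (j : Fin (2*n))
    (p : GrpPt n m) : ℝ :=
  4 * sqs p.1 * p.1 j + 16 * ∑ k, p.2 k * (J k).mulVec p.1 j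

section Calculus

variable {n m : ℕ} (J : Fin m → Matrix (Fin (2*n)) (Fin (2*n)) ℝ)

lemma XD_eq (j : Fin (2*n)) (f : GrpPt n m → ℝ) (p : GrpPt n m) :
    XD J j f p = fderiv ℝ f p (hdir J j p) := by
  have h : hdir J j p = ((Pi.single j 1, 0) : GrpPt n m)
      + (1/2 : ℝ) • ∑ k, ((J k).mulVec p.1 j) • ((0, Pi.single k 1) : GrpPt n m) := by
    ext i
    · simp [hdir, Prod.fst_sum]
    · simp [hdir, Prod.snd_sum, Finset.sum_apply, Pi.single_apply]
  rw [h, map_add, map_smul, map_sum]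
  simp only [map_smul, XD]

lemma XD_of_line {j : Fin (2*n)} {f : GrpPt n m → ℝ} {p : GrpPt n m} {d : ℝ}
    (hf : DifferentiableAt ℝ f p)
    (hd : HasDerivAt (fun s : ℝ => f (p + s • hdir J j p)) d 0) : XD J j f p = d := by
  rw [XD_eq, ← hf.lineDeriv_eq_fderiv]
  exact hd.deriv

lemma XD_congr {j : Fin (2*n)} {f g : GrpPt n m → ℝ} {p : GrpPt n m} (h : f =ᶠ[nhds p] g) :
    XD J j f p = XD J j g p := by
  rw [XD_eq, XD_eq, h.fderiv_eq]

lemma XD_comp {j : Fin (2*n)} {g : ℝ → ℝ} {g' : ℝ} {f : GrpPt n m → ℝ} {p : GrpPt n m}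
    (hg : HasDerivAt g g' (f p)) (hf : DifferentiableAt ℝ f p) :
    XD J j (fun q => g (f q)) p = g' * XD J j f p := by
  have h : HasFDerivAt (fun q => g (f q)) (g' • fderiv ℝ f p) p :=
    hg.comp_hasFDerivAt p hf.hasFDerivAt
  rw [XD_eq, XD_eq, h.fderiv]
  simp

lemma XD_mul {j : Fin (2*n)} {f g : GrpPt n m → ℝ} {p : GrpPt n m}
    (hf : DifferentiableAt ℝ f p) (hg : DifferentiableAt ℝ g p) :
    XD J j (fun q => f q * g q) p = XD J j f p * g p + f p * XD J j g p := by
  have h := hf.hasFDerivAt.fun_mul hg.hasFDerivAt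
  rw [XD_eq, XD_eq, XD_eq, h.fderiv]
  simp
  ring

lemma differentiable_kU : Differentiable ℝ (kU : GrpPt n m → ℝ) := by
  unfold kU sqs
  fun_prop

lemma differentiable_kP (j : Fin (2*n)) : Differentiable ℝ (kP J j : GrpPt n m → ℝ) := by
  unfold kP sqs Matrix.mulVec dotProduct
  fun_prop

lemma line_fst (p v : GrpPt n m) (i : Fin (2*n)) :
    HasDerivAt (fun s : ℝ => (p + s • v).1 i) (v.1 i) 0 := by
  simpa using ((hasDerivAt_id (0:ℝ)).mul_const (v.1 i)).const_add (p.1 i)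

lemma line_snd (p v : GrpPt n m) (i : Fin m) :
    HasDerivAt (fun s : ℝ => (p + s • v).2 i) (v.2 i) 0 := by
  simpa using ((hasDerivAt_id (0:ℝ)).mul_const (v.2 i)).const_add (p.2 i)

lemma line_mulVec (p v : GrpPt n m) (A : Matrix (Fin (2*n)) (Fin (2*n)) ℝ) (i : Fin (2*n)) :
    HasDerivAt (fun s : ℝ => A.mulVec (p + s • v).1 i) (A.mulVec v.1 i) 0 := by
  unfold Matrix.mulVec dotProduct
  exact HasDerivAt.fun_sum fun l _ => (line_fst p v l).const_mul (A i l)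

lemma line_sqs_fst (p v : GrpPt n m) :
    HasDerivAt (fun s : ℝ => sqs (p + s • v).1) (∑ i, 2 * p.1 i * v.1 i) 0 := by
  unfold sqs
  refine HasDerivAt.fun_sum fun i _ => ?_
  simpa using (line_fst p v i).fun_pow 2

lemma line_sqs_snd (p v : GrpPt n m) :
    HasDerivAt (fun s : ℝ => sqs (p + s • v).2) (∑ i, 2 * p.2 i * v.2 i) 0 := by
  unfold sqs
  refine HasDerivAt.fun_sum fun i _ => ?_
  simpa using (line_snd p v i).fun_pow 2

lemma XD_kU (j : Fin (2*n)) (p : GrpPt n m) : XD J j kU p = kP J j p := by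
  apply XD_of_line J (differentiable_kU p)
  have h := ((line_sqs_fst p (hdir J j p)).fun_pow 2).fun_add
    ((line_sqs_snd p (hdir J j p)).const_mul 16)
  refine h.congr_deriv ?_
  have h1 : ∑ i, 2 * p.1 i * (hdir J j p).1 i = 2 * p.1 j := by
    simp [hdir, Pi.single_apply]
  have h2 : ∑ k, 2 * p.2 k * (hdir J j p).2 k = ∑ k, p.2 k * (J k).mulVec p.1 j := by
    refine Finset.sum_congr rfl fun k _ => ?_
    simp only [hdir]
    ring
  rw [h1, h2, kP]
  simp
  ring

lemma XD_kP (j : Fin (2*n)) (p : GrpPt n m) : XD J j (kP J j) p =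
    8 * (p.1 j)^2 + 4 * sqs p.1
      + 16 * ∑ k, ((1/2) * ((J k).mulVec p.1 j)^2 + p.2 k * J k j j) := by
  apply XD_of_line J (differentiable_kP J j p)
  have h := (((line_sqs_fst p (hdir J j p)).const_mul 4).fun_mul
    (line_fst p (hdir J j p) j)).fun_add
    ((HasDerivAt.fun_sum (u := Finset.univ) fun k _ => (line_snd p (hdir J j p) k).fun_mul
      (line_mulVec p (hdir J j p) (J k) j)).const_mul 16)
  refine h.congr_deriv ?_
  have h1 : ∑ i, 2 * p.1 i * (hdir J j p).1 i = 2 * p.1 j := by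
    simp [hdir, Pi.single_apply]
  have h2 : (hdir J j p).1 j = 1 := by simp [hdir]
  rw [h1, h2]
  congr 1
  · simp
    ring
  · congr 1
    refine Finset.sum_congr rfl fun k _ => ?_
    simp [hdir]
    ring

lemma sqs_nonneg {k : ℕ} (y : Fin k → ℝ) : 0 ≤ sqs y := Finset.sum_nonneg fun _ _ => sq_nonneg _

lemma e2norm_sq {k : ℕ} (y : Fin k → ℝ) : e2norm y ^ 2 = sqs y := Real.sq_sqrt (sqs_nonneg y)

lemma e2norm_nonneg {k : ℕ} (y : Fin k → ℝ) : 0 ≤ e2norm y := Real.sqrt_nonneg _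

lemma kU_nonneg (p : GrpPt n m) : 0 ≤ kU p := by
  have := sqs_nonneg p.2
  unfold kU; positivity

lemma kN_eq (p : GrpPt n m) : kN p = kU p ^ ((1:ℝ)/4) := by
  unfold kN kU
  rw [← e2norm_sq, ← e2norm_sq]
  ring_nf

lemma wA_eq (α : ℝ) : (wA α : GrpPt n m → ℝ) = fun q => Real.exp (-(kU q ^ (α/4))) := by
  ext q
  rw [wA, kN_eq, ← Real.rpow_mul (kU_nonneg q)]
  ring_nf

/-- With `N^α = u^a`, `u = N⁴`, `a = α/4`, this is the identity
`V_α = ¼|∇N^α|² - ½ΔN^α` expanded by the chain rule. -/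
lemma VA_eq (α : ℝ) (p : GrpPt n m) (hp : 0 < kU p) :
    VA J α p = (α/4)^2/4 * kU p ^ (2 * (α/4) - 2) * (∑ j, (kP J j p)^2)
      - (α/4)/2 * kU p ^ (α/4 - 1) * (∑ j, XD J j (kP J j) p)
      - (α/4)*(α/4-1)/2 * kU p ^ (α/4 - 2) * (∑ j, (kP J j p)^2) := by
  set a := α/4 with ha
  -- `g` is the derivative of `s ↦ exp (-s^a)`, so that `X_j w = g(u) X_j u`
  set g : ℝ → ℝ := fun s => -(a * s ^ (a-1)) * Real.exp (-(s^a)) with hg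
  have hexp : ∀ s : ℝ, 0 < s → HasDerivAt (fun s => Real.exp (-(s^a))) (g s) s := by
    intro s hs
    have := (Real.hasDerivAt_rpow_const (p := a) (Or.inl hs.ne')).fun_neg.exp
    refine this.congr_deriv ?_
    simp only [hg]; ring
  have hg' : ∀ s : ℝ, 0 < s → HasDerivAt g
      ((a^2 * s ^ (2*a-2) - a*(a-1) * s ^ (a-2)) * Real.exp (-(s^a))) s := by
    intro s hs
    have h1 := ((Real.hasDerivAt_rpow_const (p := a - 1) (Or.inl hs.ne')).const_mul a).fun_neg
    have := h1.fun_mul (hexp s hs)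
    refine this.congr_deriv ?_
    have e : s ^ (2*a-2) = s^(a-1) * s^(a-1) := by
      rw [← Real.rpow_add hs]; ring_nf
    have e' : s ^ (a - 1 - 1) = s ^ (a-2) := by ring_nf
    simp only [hg]
    rw [e, e']; ring
  have hX : ∀ j (q : GrpPt n m), 0 < kU q → XD J j (wA α) q = g (kU q) * kP J j q := by
    intro j q hq
    rw [wA_eq, XD_comp J (hexp _ hq) (differentiable_kU q), XD_kU]
  have hev : ∀ᶠ q : GrpPt n m in nhds p, 0 < kU q :=
    (differentiable_kU (n := n) (m := m)).continuous.continuousAt.eventually (lt_mem_nhds hp)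
  have hXX : ∀ j, XD J j (XD J j (wA α)) p =
      ((a^2 * kU p ^ (2*a-2) - a*(a-1) * kU p ^ (a-2)) * Real.exp (-(kU p ^a))) * (kP J j p)^2
        + g (kU p) * XD J j (kP J j) p := by
    intro j
    have hc : XD J j (wA α) =ᶠ[nhds p] fun q => g (kU q) * kP J j q :=
      hev.mono fun q hq => hX j q hq
    have hd : DifferentiableAt ℝ (fun q : GrpPt n m => g (kU q)) p :=
      (hg' _ hp).differentiableAt.comp p (differentiable_kU p)
    rw [XD_congr J hc, XD_mul J hd (differentiable_kP J j p),
      XD_comp J (hg' _ hp) (differentiable_kU p), XD_kU]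
    ring
  unfold VA gradSq LSub
  simp only [hXX, hX _ p hp, mul_pow, Finset.sum_add_distrib, ← Finset.mul_sum]
  rw [wA_eq]
  simp only [← ha, hg]
  have hE := (Real.exp_pos (-(kU p ^ a))).ne'
  have e : kU p ^ (2*a-2) = kU p^(a-1) * kU p^(a-1) := by
    rw [← Real.rpow_add hp]; ring_nf
  rw [e]
  field_simp
  ring

end Calculus

/-! ### Lower bound for the potential -/

section Bounds

variable {n m : ℕ} (J : Fin m → Matrix (Fin (2*n)) (Fin (2*n)) ℝ)

/-- `(J_t x)_j`, where `J_t = ∑ t_k J_k`. -/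
def Jt (t : Fin m → ℝ) (x : Fin (2*n) → ℝ) (j : Fin (2*n)) : ℝ := ∑ k, t k * (J k).mulVec x j

/-- `∑_k |J_k|²`, with the Frobenius norm of each matrix. -/
def frob : ℝ := ∑ k, ∑ i, ∑ l, (J k i l)^2

lemma frob_nonneg : 0 ≤ frob J := by unfold frob; positivity

lemma sum_sqs_mulVec_le (x : Fin (2*n) → ℝ) :
    ∑ k, sqs ((J k).mulVec x) ≤ frob J * sqs x := by
  unfold frob
  rw [Finset.sum_mul]
  refine Finset.sum_le_sum fun k _ => ?_
  rw [Finset.sum_mul]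
  refine Finset.sum_le_sum fun i _ => ?_
  change (∑ l, J k i l * x l)^2 ≤ _
  exact Finset.sum_mul_sq_le_sq_mul_sq _ _ _

lemma sqs_Jt_le (t : Fin m → ℝ) (x : Fin (2*n) → ℝ) :
    sqs (Jt J t x) ≤ frob J * sqs t * sqs x := by
  have h1 : sqs (Jt J t x) ≤ ∑ j, sqs t * ∑ k, ((J k).mulVec x j)^2 :=
    Finset.sum_le_sum fun i _ => Finset.sum_mul_sq_le_sq_mul_sq _ _ _
  have h2 : ∑ j, sqs t * ∑ k, ((J k).mulVec x j)^2 = sqs t * ∑ k, sqs ((J k).mulVec x) := by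
    rw [← Finset.mul_sum, Finset.sum_comm]; rfl
  have h3 := mul_le_mul_of_nonneg_left (sum_sqs_mulVec_le J x) (sqs_nonneg t)
  nlinarith

lemma Jt_eq (t : Fin m → ℝ) (x : Fin (2*n) → ℝ) : Jt J t x = (∑ k, t k • J k).mulVec x := by
  ext j
  simp [Jt, Matrix.sum_mulVec, Matrix.smul_mulVec]

lemma sqs_pos {k : ℕ} {y : Fin k → ℝ} (hy : y ≠ 0) : 0 < sqs y := by
  obtain ⟨i, hi⟩ := Function.ne_iff.mp hy
  exact Finset.sum_pos' (fun _ _ => sq_nonneg _) ⟨i, Finset.mem_univ _, by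
    have : y i ≠ 0 := hi
    positivity⟩

lemma sqs_smul {k : ℕ} (c : ℝ) (y : Fin k → ℝ) : sqs (c • y) = c^2 * sqs y := by
  simp [sqs, mul_pow, Finset.mul_sum]

lemma sqs_normalize {k : ℕ} {y : Fin k → ℝ} (hy : y ≠ 0) : sqs ((e2norm y)⁻¹ • y) = 1 := by
  rw [sqs_smul, inv_pow, e2norm_sq, inv_mul_cancel₀ (sqs_pos hy).ne']

lemma isCompact_sqs (k : ℕ) : IsCompact {y : Fin k → ℝ | sqs y = 1} := by
  refine Metric.isCompact_of_isClosed_isBounded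
    (isClosed_eq (by unfold sqs; fun_prop) continuous_const) ?_
  refine (Metric.isBounded_closedBall (x := (0 : Fin k → ℝ)) (r := 1)).subset fun y hy => ?_
  rw [mem_closedBall_zero_iff, pi_norm_le_iff_of_nonneg zero_le_one]
  intro i
  have h : (y i)^2 ≤ sqs y := Finset.single_le_sum (f := fun i => (y i)^2)
    (fun _ _ => sq_nonneg _) (Finset.mem_univ i)
  rw [show sqs y = 1 from hy] at h
  rw [Real.norm_eq_abs]
  exact (sq_le_one_iff_abs_le_one _).mp h

/-- Uniform nondegeneracy: by compactness of the product of two unit spheres and homogeneity, the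
Métivier condition gives `c |t|² |x|² ≤ |J_t x|²` for some `c > 0`. -/
lemma exists_metivier_const (hMet : ∀ t : Fin m → ℝ, t ≠ 0 → IsUnit (∑ k, t k • J k)) :
    ∃ c : ℝ, 0 < c ∧ ∀ (t : Fin m → ℝ) (x : Fin (2*n) → ℝ),
      c * sqs t * sqs x ≤ sqs (Jt J t x) := by
  have hcont : Continuous fun q : (Fin m → ℝ) × (Fin (2*n) → ℝ) => sqs (Jt J q.1 q.2) := by
    unfold sqs Jt Matrix.mulVec dotProduct
    fun_prop
  obtain ⟨c, hc, h⟩ := ((isCompact_sqs m).prod (isCompact_sqs (2*n))).exists_forall_le'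
    hcont.continuousOn (a := 0) (by
      rintro ⟨t, x⟩ ⟨ht, hx⟩
      have ht0 : t ≠ 0 := by
        rintro rfl
        simp [sqs] at ht
      have hx0 : x ≠ 0 := by
        rintro rfl
        simp [sqs] at hx
      apply sqs_pos
      rw [Jt_eq]
      intro h0
      apply hx0
      apply Matrix.mulVec_injective_of_isUnit (hMet t ht0)
      simpa using h0)
  refine ⟨c, hc, fun t x => ?_⟩
  by_cases ht : t = 0
  · subst ht
    have : sqs (0 : Fin m → ℝ) = 0 := by simp [sqs]
    rw [this]
    simpa using sqs_nonneg _
  by_cases hx : x = 0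
  · subst hx
    have : sqs (0 : Fin (2*n) → ℝ) = 0 := by simp [sqs]
    rw [this]
    simpa using sqs_nonneg _
  have h1 := h ((e2norm t)⁻¹ • t, (e2norm x)⁻¹ • x) ⟨sqs_normalize ht, sqs_normalize hx⟩
  have h2 : Jt J ((e2norm t)⁻¹ • t) ((e2norm x)⁻¹ • x)
      = ((e2norm t)⁻¹ * (e2norm x)⁻¹) • Jt J t x := by
    ext j
    simp only [Jt, Matrix.mulVec_smul, Pi.smul_apply, smul_eq_mul, Finset.mul_sum]
    exact Finset.sum_congr rfl fun _ _ => by ring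
  simp only [h2, sqs_smul, mul_pow, inv_pow, e2norm_sq] at h1
  have := sqs_pos ht
  have := sqs_pos hx
  rw [← mul_inv, inv_mul_eq_div, le_div_iff₀ (by positivity)] at h1
  linarith

/-- Skew-symmetry kills the cross term `⟨x, J_t x⟩`, so `|∇_H N⁴|² = 16|x|⁶ + 256|J_t x|²`. -/
lemma sum_kP_sq (hskew : ∀ k, (J k).transpose = -(J k)) (p : GrpPt n m) :
    ∑ j, (kP J j p)^2 = 16 * sqs p.1 ^ 3 + 256 * sqs (Jt J p.2 p.1) := by
  have hk : ∀ k, p.1 ⬝ᵥ (J k).mulVec p.1 = 0 := by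
    intro k
    have h1 : p.1 ⬝ᵥ (J k).mulVec p.1 = p.1 ⬝ᵥ ((J k).transpose).mulVec p.1 := by
      rw [Matrix.mulVec_transpose, dotProduct_comm p.1 (Matrix.vecMul _ _),
        ← Matrix.dotProduct_mulVec]
    rw [hskew, Matrix.neg_mulVec, dotProduct_neg] at h1
    linarith
  have hcross : ∑ j, p.1 j * Jt J p.2 p.1 j = 0 := by
    simp only [Jt, Finset.mul_sum]
    rw [Finset.sum_comm]
    refine Finset.sum_eq_zero fun k _ => ?_
    have := hk k
    simp only [dotProduct] at this
    calc ∑ j, p.1 j * (p.2 k * (J k).mulVec p.1 j)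
        = p.2 k * ∑ j, p.1 j * (J k).mulVec p.1 j := by
          rw [Finset.mul_sum]; exact Finset.sum_congr rfl fun _ _ => by ring
      _ = 0 := by rw [this, mul_zero]
  have hj : ∀ j, (kP J j p)^2 = 16 * sqs p.1 ^ 2 * (p.1 j)^2
      + 128 * sqs p.1 * (p.1 j * Jt J p.2 p.1 j) + 256 * (Jt J p.2 p.1 j)^2 := by
    intro j
    simp only [kP, Jt]
    ring
  simp only [hj, Finset.sum_add_distrib, ← Finset.mul_sum]
  rw [hcross]
  simp only [sqs]
  ring

lemma sum_XD_kP (hskew : ∀ k, (J k).transpose = -(J k)) (p : GrpPt n m) :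
    ∑ j, XD J j (kP J j) p = 8 * (n+1) * sqs p.1 + 8 * ∑ k, sqs ((J k).mulVec p.1) := by
  have hdiag : ∀ k j, J k j j = 0 := by
    intro k j
    have := congrFun (congrFun (hskew k) j) j
    simp only [Matrix.transpose_apply, Matrix.neg_apply] at this
    linarith
  simp only [XD_kP, hdiag, mul_zero, add_zero, Finset.sum_add_distrib, ← Finset.mul_sum]
  rw [Finset.sum_comm]
  simp only [sqs, Finset.sum_const, Finset.card_univ, Fintype.card_fin, nsmul_eq_mul]
  push_cast
  ring

/-- Where `N` is large, `V_α` dominates a multiple of `|x|² N^{2α-4}`, so `V_α ≤ M` bounds `|x|`. -/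
lemma exists_sqs_le (hskew : ∀ k, (J k).transpose = -(J k))
    (hMet : ∀ t : Fin m → ℝ, t ≠ 0 → IsUnit (∑ k, t k • J k))
    (α : ℝ) (hα : 2 < α) (M : ℝ) (hM : 0 < M) :
    ∃ C U0 : ℝ, 0 < C ∧ 0 < U0 ∧ ∀ p ∈ OmegaSet J α M, U0 ≤ kU p →
      sqs p.1 ≤ C * kU p ^ (1 - 2 * (α/4)) := by
  obtain ⟨c, hc, hcle⟩ := exists_metivier_const J hMet
  set a := α/4 with ha
  have ha0 : 0 < a := by rw [ha]; linarith
  have hK := frob_nonneg J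
  set K := frob J
  set c1 := min 16 (16*c) with hc1
  have hc1pos : 0 < c1 := lt_min (by norm_num) (by positivity)
  set A := a^2/4*c1 with hA
  have hApos : 0 < A := by positivity
  set B := a/2 * (8*(n+1) + 8*K) + a*|a-1|/2 * (16 + 16*K) with hB
  have hB0 : 0 ≤ B := by positivity
  obtain ⟨U0, hU0pos, hU0⟩ : ∃ U0 : ℝ, 0 < U0 ∧ ∀ u, U0 ≤ u → B ≤ A/2 * u^a := by
    have h := ((tendsto_rpow_atTop ha0).const_mul_atTop (half_pos hApos)).eventually_ge_atTop B
    obtain ⟨b, hb⟩ := eventually_atTop.mp h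
    exact ⟨max b 1, by positivity, fun u hu => hb u (le_trans (le_max_left _ _) hu)⟩
  refine ⟨2*M/A, U0, by positivity, hU0pos, fun p hp hu => ?_⟩
  have hupos : 0 < kU p := lt_of_lt_of_le hU0pos hu
  have hV := hp.2
  rw [VA_eq J α p hupos, ← ha] at hV
  have hS := sum_kP_sq J hskew p
  have hD := sum_XD_kP J hskew p
  set S := ∑ j, (kP J j p)^2
  set D := ∑ j, XD J j (kP J j) p
  have hX := sqs_nonneg p.1
  have hT := sqs_nonneg p.2
  have hlow := hcle p.2 p.1
  have hupp := sqs_Jt_le J p.2 p.1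
  have hQ := sum_sqs_mulVec_le J p.1
  have huu : kU p = sqs p.1 ^ 2 + 16 * sqs p.2 := rfl
  set X := sqs p.1
  set T := sqs p.2
  set u := kU p
  have hTX : 0 ≤ T * X := by positivity
  have hX3 : 0 ≤ X^3 := by positivity
  have hS1 : c1 * (X * u) ≤ S := by
    have e1 : c1 ≤ 16 := min_le_left _ _
    have e2 : c1 ≤ 16*c := min_le_right _ _
    have := mul_le_mul_of_nonneg_right e1 hX3
    have := mul_le_mul_of_nonneg_right e2 hTX
    rw [hS, huu]
    nlinarith
  have hS2 : S ≤ (16+16*K) * (X * u) := by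
    have := mul_nonneg hK hX3
    rw [hS, huu]
    nlinarith
  have hD2 : D ≤ (8*(n+1) + 8*K) * X := by
    rw [hD]
    nlinarith
  set P := u^(a-1) with hP
  have hPpos : 0 < P := Real.rpow_pos_of_pos hupos _
  have e1 : u^(2*a-2) * u = P * u^a := by
    rw [hP, ← Real.rpow_add_one hupos.ne', ← Real.rpow_add hupos]; ring_nf
  have e2 : u^(a-2) * u = P := by
    rw [hP, ← Real.rpow_add_one hupos.ne']; ring_nf
  have t1 : A * (P * u^a) * X ≤ a^2/4 * u^(2*a-2) * S := by
    have h0 : 0 ≤ a^2/4 * u^(2*a-2) := by positivity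
    calc A * (P * u^a) * X = a^2/4 * u^(2*a-2) * (c1 * (X*u)) := by rw [← e1, hA]; ring
      _ ≤ _ := mul_le_mul_of_nonneg_left hS1 h0
  have t2 : a/2 * P * D ≤ a/2 * P * ((8*(n+1) + 8*K) * X) :=
    mul_le_mul_of_nonneg_left hD2 (by positivity)
  have t3 : a*(a-1)/2 * u^(a-2) * S ≤ a*|a-1|/2 * P * ((16+16*K) * X) := by
    have hS0 : 0 ≤ S := Finset.sum_nonneg fun _ _ => sq_nonneg _
    calc a*(a-1)/2 * u^(a-2) * S ≤ a*|a-1|/2 * u^(a-2) * S := by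
          gcongr
          exact le_abs_self _
      _ ≤ a*|a-1|/2 * u^(a-2) * ((16+16*K) * (X * u)) := by gcongr
      _ = a*|a-1|/2 * (u^(a-2) * u) * ((16+16*K) * X) := by ring
      _ = _ := by rw [e2]
  have t4 : B * (P * X) ≤ A/2 * u^a * (P * X) :=
    mul_le_mul_of_nonneg_right (hU0 u hu) (by positivity)
  have t5 : A/2 * (P * u^a) * X ≤ M := by
    have hBX : a/2 * P * ((8*(n+1) + 8*K) * X) + a*|a-1|/2 * P * ((16+16*K) * X)
        = B * (P * X) := by rw [hB]; ring
    have hAX : A/2 * u^a * (P * X) = A/2 * (P * u^a) * X := by ring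
    have hAX' : A * (P * u^a) * X = A/2 * (P * u^a) * X + A/2 * (P * u^a) * X := by ring
    linarith
  have e3 : u^(1-2*a) * (P * u^a) = 1 := by
    rw [hP, ← Real.rpow_add hupos, ← Real.rpow_add hupos]
    ring_nf
    exact Real.rpow_zero _
  have hw : 0 < P * u^a := by positivity
  have hle : X * (P * u^a) ≤ 2*M/A := by
    rw [le_div_iff₀ hApos]; linarith
  calc X = (X * (P * u^a)) * u^(1-2*a) := by
        rw [mul_assoc, mul_comm (P * u^a), e3, mul_one]
    _ ≤ 2*M/A * u^(1-2*a) := mul_le_mul_of_nonneg_right hle (by positivity)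

/-- Since `|t|² ≤ N⁴`, the sublevel set thins out like `|x|² ≤ C |t|^{2-α}` for large `|t|`. -/
lemma exists_sqs_le_rpow (hskew : ∀ k, (J k).transpose = -(J k))
    (hMet : ∀ t : Fin m → ℝ, t ≠ 0 → IsUnit (∑ k, t k • J k))
    (α : ℝ) (hα : 2 < α) (M : ℝ) (hM : 0 < M) :
    ∃ C T0 : ℝ, 0 < C ∧ 1 ≤ T0 ∧ ∀ p ∈ OmegaSet J α M, T0 ≤ e2norm p.2 →
      sqs p.1 ≤ C * e2norm p.2 ^ (2 - α) := by
  obtain ⟨C, U0, hC, hU0, h⟩ := exists_sqs_le J hskew hMet α hα M hM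
  refine ⟨C, max 1 U0, hC, le_max_left _ _, fun p hp hT => ?_⟩
  have h1 : 1 ≤ e2norm p.2 := le_trans (le_max_left _ _) hT
  have h2 : U0 ≤ e2norm p.2 := le_trans (le_max_right _ _) hT
  have h3 : e2norm p.2 ^ 2 ≤ kU p := by
    have := e2norm_sq p.2
    have := sqs_nonneg p.2
    unfold kU
    nlinarith [sq_nonneg (sqs p.1)]
  refine (h p hp (by nlinarith)).trans (mul_le_mul_of_nonneg_left ?_ hC.le)
  calc kU p ^ (1 - 2 * (α/4)) ≤ (e2norm p.2 ^ 2) ^ (1 - 2*(α/4)) :=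
        Real.rpow_le_rpow_of_nonpos (by positivity) h3 (by linarith)
    _ = e2norm p.2 ^ (2 - α) := by
        rw [← Real.rpow_natCast, ← Real.rpow_mul (e2norm_nonneg _)]
        ring_nf

end Bounds

/-! ### Geometry of the ball and the volume estimate -/

section Ball

lemma abs_le_e2norm {k : ℕ} (y : Fin k → ℝ) (i : Fin k) : |y i| ≤ e2norm y :=
  Real.abs_le_sqrt (Finset.single_le_sum (f := fun i => (y i)^2)
    (fun _ _ => sq_nonneg _) (Finset.mem_univ i))

lemma e2norm_eq_norm {k : ℕ} (y : Fin k → ℝ) : e2norm y = ‖WithLp.toLp 2 y‖ := by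
  simp [EuclideanSpace.norm_eq, e2norm]

lemma e2norm_add_le {k : ℕ} (y z : Fin k → ℝ) : e2norm (y + z) ≤ e2norm y + e2norm z := by
  simp only [e2norm_eq_norm, WithLp.toLp_add]
  exact norm_add_le _ _

lemma e2norm_le_of_abs_le {k : ℕ} {y : Fin k → ℝ} {R : ℝ} (hR : 0 ≤ R) (h : ∀ i, |y i| ≤ R) :
    e2norm y ≤ k * R := by
  refine Real.sqrt_le_iff.mpr ⟨by positivity, ?_⟩
  have h1 : ∑ i, (y i)^2 ≤ ∑ _i : Fin k, R^2 :=
    Finset.sum_le_sum fun i _ => sq_le_sq.mpr (by rw [abs_of_nonneg hR]; exact h i)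
  refine h1.trans ?_
  rw [Finset.sum_const, Finset.card_univ, Fintype.card_fin, nsmul_eq_mul, mul_pow]
  have : (k:ℝ) ≤ (k:ℝ)^2 := by exact_mod_cast Nat.le_self_pow two_ne_zero k
  gcongr

lemma abs_sum_mul_le {k : ℕ} (y z : Fin k → ℝ) : |∑ i, y i * z i| ≤ e2norm y * e2norm z := by
  refine abs_le_of_sq_le_sq ?_ (mul_nonneg (e2norm_nonneg _) (e2norm_nonneg _))
  rw [mul_pow, e2norm_sq, e2norm_sq]
  exact Finset.sum_mul_sq_le_sq_mul_sq _ _ _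

variable {n m : ℕ} (J : Fin m → Matrix (Fin (2*n)) (Fin (2*n)) ℝ)

lemma e2norm_lt_of_kN_lt {p : GrpPt n m} {r : ℝ} (h : kN p < r) :
    e2norm p.1 < r ∧ e2norm p.2 ≤ r^2 := by
  have hN0 : 0 ≤ kN p := by
    rw [kN_eq]
    exact Real.rpow_nonneg (kU_nonneg p) _
  have hN4 : kN p ^ 4 = e2norm p.1 ^ 4 + 16 * e2norm p.2 ^ 2 := by
    unfold kN
    rw [← Real.rpow_natCast, ← Real.rpow_mul (by positivity)]
    norm_num
  have hlt : kN p ^ 4 < r ^ 4 := pow_lt_pow_left₀ h hN0 (by norm_num)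
  have hr : 0 ≤ r := hN0.trans h.le
  constructor
  · refine lt_of_pow_lt_pow_left₀ 4 hr ?_
    nlinarith [sq_nonneg (e2norm p.2)]
  · refine le_of_sq_le_sq ?_ (sq_nonneg r)
    nlinarith [sq_nonneg (e2norm p.2), sq_nonneg (e2norm p.1 ^ 2)]

/-- A ball centred at `p` with `|x| ≤ ρ` has vertical extent bounded independently of `t`. -/
lemma kBall_vertical {p h : GrpPt n m} {r ρ : ℝ} (hρ : 0 ≤ ρ) (hp : e2norm p.1 ≤ ρ)
    (hh : h ∈ kBall J p r) (k : Fin m) :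
    |h.2 k - p.2 k| ≤ r^2 + Real.sqrt (frob J) * ρ * (ρ + r) := by
  obtain ⟨h1, h2⟩ := e2norm_lt_of_kN_lt hh
  simp only [gmul] at h1 h2
  have hh1 : e2norm h.1 ≤ ρ + r := by
    have := e2norm_add_le p.1 (-p.1 + h.1)
    rw [add_neg_cancel_left] at this
    linarith
  have hJ : e2norm ((J k).mulVec p.1) ≤ Real.sqrt (frob J) * ρ := by
    have hx : e2norm ((J k).mulVec p.1) ≤ Real.sqrt (frob J) * e2norm p.1 := by
      refine le_of_sq_le_sq ?_ (mul_nonneg (Real.sqrt_nonneg _) (e2norm_nonneg _))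
      rw [mul_pow, Real.sq_sqrt (frob_nonneg J), e2norm_sq, e2norm_sq]
      exact (Finset.single_le_sum (f := fun k => sqs ((J k).mulVec p.1))
        (fun _ _ => sqs_nonneg _) (Finset.mem_univ k)).trans (sum_sqs_mulVec_le J p.1)
    exact hx.trans (mul_le_mul_of_nonneg_left hp (Real.sqrt_nonneg _))
  have hin : |∑ i, (J k).mulVec p.1 i * h.1 i| ≤ Real.sqrt (frob J) * ρ * (ρ + r) :=
    (abs_sum_mul_le _ _).trans (mul_le_mul hJ hh1 (e2norm_nonneg _) (by positivity))
  have h3 := (abs_le_e2norm _ k).trans h2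
  simp only [Pi.add_apply, Pi.neg_apply, Matrix.mulVec_neg, neg_mul, Finset.sum_neg_distrib] at h3
  rw [abs_le] at h3 hin ⊢
  constructor <;> linarith [h3.1, h3.2, hin.1, hin.2]

end Ball

/-- Measure estimate for the intersection of `Ω_{α,M}` with balls centred far away. -/
theorem sublevel_ball_measure (n m : ℕ) (hn : 1 ≤ n) (hm : 1 ≤ m)
    (J : Fin m → Matrix (Fin (2*n)) (Fin (2*n)) ℝ)
    (hskew : ∀ k, (J k).transpose = -(J k))
    (hMet : ∀ t : Fin m → ℝ, t ≠ 0 → IsUnit (∑ k, t k • J k))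
    (α : ℝ) (hα : 2 < α) :
    ∀ M : ℝ, 0 < M → ∀ r : ℝ, 0 < r → ∃ k : ℝ, 0 < k ∧ ∃ C : ℝ, 0 < C ∧
      ∀ p : GrpPt n m, p ∈ OmegaSet J α M → k < e2norm p.2 →
        volume (OmegaSet J α M ∩ kBall J p r)
          ≤ ENNReal.ofReal (C * e2norm p.2 ^ ((n:ℝ) * (2 - α))) := by
  intro M hM r hr
  obtain ⟨C1, T0, hC1, hT0, hbound⟩ := exists_sqs_le_rpow J hskew hMet α hα M hM
  set R : ℝ := r^2 + Real.sqrt (frob J) * Real.sqrt C1 * (Real.sqrt C1 + r) with hR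
  have hRpos : 0 < R := by positivity
  -- on `|t| > k` the whole ball stays in the region `|t'| ≥ |t|/2 ≥ T0`
  refine ⟨2 * T0 + 2 * (m * R), by positivity,
    4^n * (C1 * 2 ^ (α - 2))^n * (2*R)^m, by positivity, fun p hp hpk => ?_⟩
  have hmR : 0 ≤ m * R := by positivity
  set τ := e2norm p.2 with hτ
  have hτ1 : 1 ≤ τ := by linarith
  have hτ0 : 0 < τ := by linarith
  have hpx : e2norm p.1 ≤ Real.sqrt C1 := by
    refine Real.sqrt_le_sqrt ((hbound p hp (by linarith)).trans ?_)
    exact mul_le_of_le_one_right hC1.le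
      (Real.rpow_le_one_of_one_le_of_nonpos hτ1 (by linarith))
  set ρ := Real.sqrt (C1 * 2 ^ (α - 2) * τ ^ (2 - α)) with hρ
  have hρ0 : 0 ≤ ρ := Real.sqrt_nonneg _
  have hsub : OmegaSet J α M ∩ kBall J p r ⊆
      Metric.closedBall (0 : Fin (2*n) → ℝ) ρ ×ˢ Metric.closedBall p.2 R := by
    rintro h ⟨hΩ, hB⟩
    have hv := kBall_vertical J (Real.sqrt_nonneg C1) hpx hB
    have hfar : τ ≤ e2norm h.2 + m * R := by
      have h1 := e2norm_add_le h.2 (p.2 - h.2)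
      rw [add_sub_cancel] at h1
      have h2 : e2norm (p.2 - h.2) ≤ m * R := e2norm_le_of_abs_le hRpos.le fun i => by
        rw [Pi.sub_apply, abs_sub_comm]
        exact hv i
      linarith
    have hhalf : τ / 2 ≤ e2norm h.2 := by linarith
    have hx : e2norm h.1 ≤ ρ := by
      refine Real.sqrt_le_sqrt ((hbound h hΩ (by linarith)).trans ?_)
      rw [mul_assoc]
      refine mul_le_mul_of_nonneg_left ?_ hC1.le
      calc e2norm h.2 ^ (2 - α) ≤ (τ/2) ^ (2 - α) :=
            Real.rpow_le_rpow_of_nonpos (by positivity) hhalf (by linarith)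
        _ = 2 ^ (α - 2) * τ ^ (2 - α) := by
            rw [Real.div_rpow hτ0.le (by norm_num), show α - 2 = -(2 - α) by ring,
              Real.rpow_neg (by norm_num), div_eq_inv_mul]
    refine ⟨?_, ?_⟩
    · rw [mem_closedBall_zero_iff, pi_norm_le_iff_of_nonneg hρ0]
      exact fun i => (abs_le_e2norm h.1 i).trans hx
    · rw [Metric.mem_closedBall, dist_pi_le_iff hRpos.le]
      exact fun i => hv i
  refine (measure_mono hsub).trans ?_
  rw [Measure.volume_eq_prod, Measure.prod_prod, Real.volume_pi_closedBall _ hρ0,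
    Real.volume_pi_closedBall _ hRpos.le, ← ENNReal.ofReal_mul (by positivity)]
  refine ENNReal.ofReal_le_ofReal (le_of_eq ?_)
  have hpow : (τ ^ (2 - α))^n = τ ^ ((n:ℝ) * (2 - α)) := by
    rw [← Real.rpow_natCast, ← Real.rpow_mul hτ0.le, mul_comm]
  rw [Fintype.card_fin, Fintype.card_fin, mul_pow 2 ρ, pow_mul, pow_mul ρ, hρ,
    Real.sq_sqrt (by positivity), mul_pow _ (τ ^ (2 - α)), hpow]
  norm_num
  ring

end
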